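/- Let a ∈ (0,1) and s ∈ ℝ. For every ε > 0 there exists a constant C_ε > 0 such that for every δ ∈ (0,1) and every Schwartz function f on ℝ² one has ‖ψ(t/δ) f‖_{X^{1/2}_s} ≤ C_ε δ^{−ε} ‖f‖_{X^{1/2}_s}, where ψ(t/δ) f denotes the function (x,t) ↦ ψ(t/δ) f(x,t). -/

import Mathlib

/-!
On the Fourier side, multiplication by `ψ (t / δ)` is convolution in `λ`, for each fixed `ξ`, with
a kernel `κ` obtained from a Schwartz function by the `L¹`-preserving dilation of scale `1 / δ`
(`FT2_cutoff`, `enorm_FT2_cutoff_le`). So it suffices to bound this convolution on the norm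
`∑ⱼ 2 ^ (j / 2) ‖χⱼ ^ (1/2) G‖_{L²}`.

Split `G = ∑ₖ χₖ G` in the modulation `λ - ω(ξ)`. The part of output modulation `2 ^ j` and
input modulation `2 ^ k` is treated by Schur's test (`block_bound`). If `j ≤ k + 2`, the operator
norm is at most `‖κ‖₁`, and `∑_{j ≤ k + 2} 2 ^ (j / 2)` is comparable to `2 ^ (k / 2)`. If
`j ≥ k + 3`, only values of `κ` at distance `≳ 2 ^ j` from the origin occur. There
`κ ≲ δ (1 + δ 2 ^ j) ^ (-2) ≤ δ ^ (-ε) 2 ^ (-j (1 + ε))`, and the sizes of the dyadic regions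
contribute `2 ^ (j / 2) 2 ^ (k / 2)`, so that `2 ^ (j / 2)` times the operator norm is
`≲ δ ^ (-ε) 2 ^ (-ε j) 2 ^ (k / 2)`, summable in `j` (`sum_interaction_le`). Minkowski's inequality
over `k` concludes (`eX_convolution_le`).

These estimates are carried out in `ℝ≥0∞`. To return to real numbers one needs the norm of a
Schwartz function to be finite (`eX_schwartz_ne_top`), as otherwise the right-hand side would be
a junk value.
-/

open MeasureTheory Complex

noncomputable section

/-- The dispersive symbol `ω(ξ) = ξ |ξ|^(1+a)`. -/
def disp (a ξ : ℝ) : ℝ := ξ * |ξ| ^ (1 + a)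

/-- Fourier transform on `ℝ`, convention `f̂(ξ) = ∫ e^{ixξ} f(x) dx`. -/
def FT1 (f : ℝ → ℂ) (ξ : ℝ) : ℂ :=
  ∫ x : ℝ, Complex.exp (Complex.I * ((x * ξ : ℝ) : ℂ)) * f x

/-- Spacetime Fourier transform, convention `f̂(ξ,λ) = ∫ e^{i(xξ+tλ)} f(x,t) dx dt`,
for `f : ℝ × ℝ → ℂ` with first coordinate `x` (space) and second `t` (time). -/
def FT2 (f : ℝ × ℝ → ℂ) (ξ lam : ℝ) : ℂ :=
  ∫ p : ℝ × ℝ, Complex.exp (Complex.I * ((p.1 * ξ + p.2 * lam : ℝ) : ℂ)) * f p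

/-- The dyadic cutoffs `χ_j`: `χ_0 = χ₀` and `χ_j(z) = χ(2^{-j} z)` for `j ≥ 1`. -/
def chiJ (χ₀ χ : ℝ → ℝ) (j : ℕ) (z : ℝ) : ℝ :=
  if j = 0 then χ₀ z else χ ((2 : ℝ) ^ (-(j : ℝ)) * z)

/-- Hypotheses on the fixed dyadic cutoffs. -/
structure DyadicCutoffs (χ₀ χ : ℝ → ℝ) : Prop where
  smooth0 : ContDiff ℝ (⊤ : ℕ∞) χ₀
  even0 : ∀ z, χ₀ (-z) = χ₀ z
  mem0 : ∀ z, χ₀ z ∈ Set.Icc (0 : ℝ) 1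
  supp0 : ∀ z, 2 < |z| → χ₀ z = 0
  one0 : ∀ z, |z| ≤ 1 → χ₀ z = 1
  smooth1 : ContDiff ℝ (⊤ : ℕ∞) χ
  even1 : ∀ z, χ (-z) = χ z
  mem1 : ∀ z, χ z ∈ Set.Icc (0 : ℝ) 1
  supp1 : ∀ z, χ z ≠ 0 → 1 / 2 < |z| ∧ |z| < 2
  partition : ∀ z, ∑' j : ℕ, chiJ χ₀ χ j z = 1

/-- A smooth time cutoff supported in `[-1,1]`. -/
structure TimeCutoff (ψ : ℝ → ℝ) : Prop where
  smooth : ContDiff ℝ (⊤ : ℕ∞) ψ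
  supp : ∀ t, ψ t ≠ 0 → |t| ≤ 1

/-- The norm `‖f‖_{X^b_s}`. -/
def Xnorm (a : ℝ) (χ₀ χ : ℝ → ℝ) (b s : ℝ) (f : ℝ × ℝ → ℂ) : ℝ :=
  ∑' j : ℕ, (2 : ℝ) ^ ((j : ℝ) * b) *
    (∫ p : ℝ × ℝ, chiJ χ₀ χ j (p.2 - disp a p.1) * (1 + |p.1|) ^ (2 * s) *
      ‖FT2 f p.1 p.2‖ ^ 2) ^ ((1 : ℝ) / 2)

/-- The norm `‖f‖_{Y^b_{s₀,s₁}} = ‖x·f‖_{X^b_{s₀}} + ‖t·f‖_{X^b_{s₁}}`. -/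
def Ynorm (a : ℝ) (χ₀ χ : ℝ → ℝ) (b s₀ s₁ : ℝ) (f : ℝ × ℝ → ℂ) : ℝ :=
  Xnorm a χ₀ χ b s₀ (fun p => (p.1 : ℂ) * f p) +
    Xnorm a χ₀ χ b s₁ (fun p => (p.2 : ℂ) * f p)

/-- The norm `‖f‖_{Z^b_s} = ‖f‖_{X^b_s} + ‖f‖_{Y^b_{s-2s*,s}}`, where `s* = 1/2 + a/2`. -/
def Znorm (a : ℝ) (χ₀ χ : ℝ → ℝ) (b s : ℝ) (f : ℝ × ℝ → ℂ) : ℝ :=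
  Xnorm a χ₀ χ b s f + Ynorm a χ₀ χ b (s - 2 * (1 / 2 + a / 2)) s f

/-- The norm `‖f‖_{X̃^b_s}`. -/
def XtildeNorm (a b s : ℝ) (f : ℝ × ℝ → ℂ) : ℝ :=
  (∫ p : ℝ × ℝ, (1 + |p.2 - disp a p.1|) ^ (2 * b) * (1 + |p.1|) ^ (2 * s) *
    ‖FT2 f p.1 p.2‖ ^ 2) ^ ((1 : ℝ) / 2)

/-- The Sobolev norm `‖g‖_{H^s} = (∫ (1+|ξ|)^{2s} |ĝ(ξ)|² dξ)^{1/2}`. -/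
def Hnorm (s : ℝ) (g : ℝ → ℂ) : ℝ :=
  (∫ ξ : ℝ, (1 + |ξ|) ^ (2 * s) * ‖FT1 g ξ‖ ^ 2) ^ ((1 : ℝ) / 2)

/-- The weighted norm `‖g‖_{F^s} = ‖g‖_{H^s} + ‖x·g‖_{H^{s-2s*}}` (here `sstar = s*`). -/
def Fnorm (sstar s : ℝ) (g : ℝ → ℂ) : ℝ :=
  Hnorm s g + Hnorm (s - 2 * sstar) (fun x => (x : ℂ) * g x)

/-- The `L^p` norm `(∫ ‖f‖^p)^{1/p}`. -/
def Lpnorm {α : Type*} [MeasureSpace α] {E : Type*} [NormedAddCommGroup E]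
    (p : ℝ) (f : α → E) : ℝ :=
  (∫ x, ‖f x‖ ^ p) ^ (1 / p)

/-- The linear propagator `W(t)`, defined via Fourier inversion so that its Fourier
transform in `x` is `e^{itω(ξ)} û₀(ξ)`. -/
def Wgrp (a : ℝ) (u₀ : ℝ → ℂ) (t x : ℝ) : ℂ :=
  ((1 / (2 * Real.pi) : ℝ) : ℂ) *
    ∫ ξ : ℝ, Complex.exp (-(Complex.I * ((x * ξ : ℝ) : ℂ))) *
      (Complex.exp (Complex.I * ((t * disp a ξ : ℝ) : ℂ)) * FT1 u₀ ξ)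

/-- The Fourier multiplier `D^σ` with symbol `|ξ|^σ`, via Fourier inversion. -/
def Dop (σ : ℝ) (g : ℝ → ℂ) (x : ℝ) : ℂ :=
  ((1 / (2 * Real.pi) : ℝ) : ℂ) *
    ∫ ξ : ℝ, Complex.exp (-(Complex.I * ((x * ξ : ℝ) : ℂ))) *
      (((|ξ| ^ σ : ℝ) : ℂ) * FT1 g ξ)

open scoped ENNReal FourierTransform SchwartzMap

/-! ### The Fourier transform and multiplication by a time cutoff -/

/-- The space-time Fourier transform of a Schwartz function is Schwartz. Mathlib's transform needs an
inner product space, hence the detour through `WithLp 2 (ℝ × ℝ)`; the dilation by `-1 / (2π)`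
accounts for the normalisation. -/
lemma exists_schwartz_FT2 (f : SchwartzMap (ℝ × ℝ) ℂ) :
    ∃ F : SchwartzMap (ℝ × ℝ) ℂ, ∀ ξ lam, F (ξ, lam) = FT2 (fun p => f p) ξ lam := by
  let e : WithLp 2 (ℝ × ℝ) ≃L[ℝ] ℝ × ℝ := WithLp.prodContinuousLinearEquiv 2 ℝ ℝ ℝ
  let m : (ℝ × ℝ) ≃L[ℝ] ℝ × ℝ :=
    ContinuousLinearEquiv.smulLeft (Units.mk0 (-(2 * Real.pi)⁻¹ : ℝ) (by
      have := Real.pi_pos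
      simp [this.ne']))
  refine ⟨SchwartzMap.compCLMOfContinuousLinearEquiv ℂ (m.trans e.symm)
    (𝓕 (SchwartzMap.compCLMOfContinuousLinearEquiv ℂ e f)), fun ξ lam => ?_⟩
  rw [SchwartzMap.compCLMOfContinuousLinearEquiv_apply]
  simp only [Function.comp, SchwartzMap.fourier_coe, Real.fourier_eq', FT2]
  rw [← (WithLp.volume_preserving_toLp ℝ ℝ).integral_comp
    (MeasurableEquiv.toLp 2 (ℝ × ℝ)).measurableEmbedding]
  refine integral_congr_ae (Filter.Eventually.of_forall fun p => ?_)
  have h : e (WithLp.toLp 2 p) = p := rfl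
  simp only [SchwartzMap.compCLMOfContinuousLinearEquiv_apply, Function.comp, h, smul_eq_mul]
  congr 2
  have h2 : (m.trans e.symm) (ξ, lam) =
    WithLp.toLp 2 (-(2 * Real.pi)⁻¹ * ξ, -(2 * Real.pi)⁻¹ * lam) := rfl
  rw [h2, WithLp.prod_inner_apply]
  simp only [RCLike.inner_apply, conj_trivial]
  rw [mul_comm Complex.I]
  congr 2
  have := Real.pi_pos
  field_simp
  ring

/-- Fourier inversion for the time cutoff, with a Schwartz density `Φ`. -/
lemma exists_fourier_rep (ψ : ℝ → ℝ) (hψ : TimeCutoff ψ) :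
    ∃ Φ : SchwartzMap ℝ ℂ, ∀ t, (ψ t : ℂ) =
      ∫ v : ℝ, Complex.exp (Complex.I * ((2 * Real.pi * (v * t) : ℝ) : ℂ)) * Φ v := by
  have hc : HasCompactSupport (fun t => (ψ t : ℂ)) := by
    refine HasCompactSupport.of_support_subset_isCompact (isCompact_Icc (a := (-1:ℝ)) (b := 1)) ?_
    intro t ht
    have : ψ t ≠ 0 := by simpa using ht
    exact abs_le.mp (hψ.supp t this)
  have hs : ContDiff ℝ (⊤ : ℕ∞) (fun t => (ψ t : ℂ)) :=
    Complex.ofRealCLM.contDiff.comp hψ.smooth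
  let g : SchwartzMap ℝ ℂ := hc.toSchwartzMap hs
  refine ⟨𝓕 g, fun t => ?_⟩
  have h1 : 𝓕⁻ (𝓕 g) = g := FourierTransform.fourierInv_fourier_eq g
  have h2 : (ψ t : ℂ) = (𝓕⁻ (𝓕 g)) t := by rw [h1]; rfl
  rw [h2, SchwartzMap.fourierInv_coe, Real.fourierInv_eq']
  refine integral_congr_ae (Filter.Eventually.of_forall fun v => ?_)
  simp only [smul_eq_mul, RCLike.inner_apply, conj_trivial]
  rw [mul_comm Complex.I, mul_comm v t]

/-- Multiplication by `ψ (t / δ)` becomes an average of translates in the time frequency. -/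
lemma FT2_cutoff (ψ : ℝ → ℝ) (Φ : SchwartzMap ℝ ℂ)
    (hΦ : ∀ t, (ψ t : ℂ) =
      ∫ v : ℝ, Complex.exp (Complex.I * ((2 * Real.pi * (v * t) : ℝ) : ℂ)) * Φ v)
    (f : SchwartzMap (ℝ × ℝ) ℂ) (δ : ℝ) (ξ lam : ℝ) :
    FT2 (fun p : ℝ × ℝ => (ψ (p.2 / δ) : ℂ) * f p) ξ lam =
      ∫ v : ℝ, Φ v * FT2 (fun p => f p) ξ (lam + 2 * Real.pi / δ * v) := by
  have hint : Integrable (Function.uncurry fun (p : ℝ × ℝ) (v : ℝ) =>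
      Complex.exp (Complex.I *
        ((p.1 * ξ + p.2 * (lam + 2 * Real.pi / δ * v) : ℝ) : ℂ)) * (f p * Φ v))
      (volume.prod volume) := by
    have h0 : Integrable (fun z : (ℝ × ℝ) × ℝ => f z.1 * Φ z.2) (volume.prod volume) :=
      f.integrable.mul_prod Φ.integrable
    refine h0.bdd_mul (c := 1) ?_ ?_
    · exact (Continuous.aestronglyMeasurable (by fun_prop))
    · refine Filter.Eventually.of_forall fun z => ?_
      rw [mul_comm, Complex.norm_exp_ofReal_mul_I]
  have h := integral_integral_swap hint
  simp only [FT2, ← integral_const_mul]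
  calc _ = ∫ p : ℝ × ℝ, ∫ v : ℝ, Complex.exp (Complex.I *
        ((p.1 * ξ + p.2 * (lam + 2 * Real.pi / δ * v) : ℝ) : ℂ)) * (f p * Φ v) := ?_
    _ = _ := h
    _ = _ := ?_
  · refine integral_congr_ae (Filter.Eventually.of_forall fun p => ?_)
    simp only
    rw [hΦ, mul_comm (∫ v : ℝ, _) (f p), ← mul_assoc, ← integral_const_mul]
    refine integral_congr_ae (Filter.Eventually.of_forall fun v => ?_)
    simp only
    have : Complex.exp (Complex.I * ((p.1 * ξ + p.2 * (lam + 2 * Real.pi / δ * v) : ℝ) : ℂ)) =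
      Complex.exp (Complex.I * ((p.1 * ξ + p.2 * lam : ℝ) : ℂ)) *
      Complex.exp (Complex.I * ((2 * Real.pi * (v * (p.2 / δ)) : ℝ) : ℂ)) := by
      rw [← Complex.exp_add]
      congr 1
      push_cast
      ring
    rw [this]
    ring
  · refine integral_congr_ae (Filter.Eventually.of_forall fun v => ?_)
    refine integral_congr_ae (Filter.Eventually.of_forall fun p => ?_)
    simp only
    ring

/-- After the cutoff, the Fourier transform is dominated, for each `ξ`, by a convolution in the time
frequency with the kernel `κ u = b ‖Φ (-b u)‖`, `b = δ / (2π)`. -/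
lemma enorm_FT2_cutoff_le (ψ : ℝ → ℝ) (Φ : SchwartzMap ℝ ℂ)
    (hΦ : ∀ t, (ψ t : ℂ) =
      ∫ v : ℝ, Complex.exp (Complex.I * ((2 * Real.pi * (v * t) : ℝ) : ℂ)) * Φ v)
    (f F : SchwartzMap (ℝ × ℝ) ℂ) (hF : ∀ ξ lam, F (ξ, lam) = FT2 (fun p => f p) ξ lam)
    (δ : ℝ) (hδ : 0 < δ) (ξ lam : ℝ) :
    ‖FT2 (fun p : ℝ × ℝ => (ψ (p.2 / δ) : ℂ) * f p) ξ lam‖ₑ ≤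
      ∫⁻ μ : ℝ, ENNReal.ofReal (δ / (2 * Real.pi)) *
        ‖Φ (-(δ / (2 * Real.pi)) * (lam - μ))‖ₑ * ‖F (ξ, μ)‖ₑ := by
  rw [FT2_cutoff ψ Φ hΦ]
  refine (enorm_integral_le_lintegral_enorm _).trans ?_
  have hpi := Real.pi_pos
  set c : ℝ := 2 * Real.pi / δ with hc
  have hc0 : 0 < c := by positivity
  -- substitution `μ = lam + (2π/δ) v`
  have hsub := lintegral_image_eq_lintegral_abs_deriv_mul (s := Set.univ)
    (f := fun v : ℝ => lam + c * v) (f' := fun _ => c) MeasurableSet.univ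
    (fun x _ => by
      simpa using
        (((hasDerivAt_id x).const_mul c).const_add lam).hasDerivWithinAt (s := Set.univ))
    (fun x _ y _ h => by simpa [hc0.ne'] using h)
    (fun μ => ENNReal.ofReal (δ / (2 * Real.pi)) *
        ‖Φ (-(δ / (2 * Real.pi)) * (lam - μ))‖ₑ * ‖F (ξ, μ)‖ₑ)
  have himg : (fun v : ℝ => lam + c * v) '' Set.univ = Set.univ := by
    refine Set.eq_univ_of_forall fun μ => ⟨(μ - lam) / c, trivial, ?_⟩
    simp only
    field_simp
    ring
  rw [himg, setLIntegral_univ, setLIntegral_univ] at hsub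
  rw [hsub]
  refine lintegral_mono fun v => le_of_eq ?_
  simp only
  have h1 : -(δ / (2 * Real.pi)) * (lam - (lam + c * v)) = v := by
    rw [hc]; field_simp; ring
  rw [h1, enorm_mul, hF, ← mul_assoc, ← mul_assoc, ← ENNReal.ofReal_mul (abs_nonneg _),
    abs_of_pos hc0]
  have : c * (δ / (2 * Real.pi)) = 1 := by rw [hc]; field_simp
  rw [this]; simp

/-! ### Integral inequalities in `L²` -/

/-- Cauchy–Schwarz with the weight `k`. -/
lemma lintegral_sq_le {α : Type*} [MeasurableSpace α] (ν : Measure α) {k g : α → ℝ≥0∞}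
    (hk : Measurable k) (hg : Measurable g) :
    (∫⁻ x, k x * g x ∂ν) ^ 2 ≤ (∫⁻ x, k x ∂ν) * ∫⁻ x, k x * g x ^ 2 ∂ν := by
  have h := ENNReal.lintegral_mul_le_Lp_mul_Lq ν Real.HolderConjugate.two_two
    (f := fun x => k x ^ (1/2 : ℝ)) (g := fun x => k x ^ (1/2 : ℝ) * g x)
    (by fun_prop) (by fun_prop)
  have e1 : ∀ x, k x ^ (1/2 : ℝ) * (k x ^ (1/2 : ℝ) * g x) = k x * g x := fun x => by
    rw [← mul_assoc, ← ENNReal.rpow_add_of_nonneg _ _ (by norm_num) (by norm_num)]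
    norm_num
  have e2 : ∀ x, (k x ^ (1/2 : ℝ)) ^ (2:ℝ) = k x := fun x => by
    rw [← ENNReal.rpow_mul]; norm_num
  have e3 : ∀ x, (k x ^ (1/2 : ℝ) * g x) ^ (2:ℝ) = k x * g x ^ 2 := fun x => by
    rw [ENNReal.mul_rpow_of_nonneg _ _ (by norm_num), e2, ENNReal.rpow_two]
  simp only [Pi.mul_apply, e1, e2, e3] at h
  calc _ ≤ ((∫⁻ x, k x ∂ν) ^ (1/2 : ℝ) * (∫⁻ x, k x * g x ^ 2 ∂ν) ^ (1/2 : ℝ)) ^ 2 := by gcongr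
    _ = _ := by
      rw [mul_pow, ← ENNReal.rpow_two, ← ENNReal.rpow_two, ← ENNReal.rpow_mul,
        ← ENNReal.rpow_mul]
      norm_num

/-- Schur's test between two weights: the bounds `P` and `Q` on the row and column integrals of the
kernel are only needed where the weights do not vanish. -/
lemma schur_bound {cj ck κ g : ℝ → ℝ≥0∞} (hcj : Measurable cj) (hck : Measurable ck)
    (hκ : Measurable κ) (hg : Measurable g) (P Q : ℝ≥0∞)
    (hP : ∀ l, cj l ≠ 0 → ∫⁻ m, κ (l - m) * ck m ≤ P)
    (hQ : ∀ m, ck m ≠ 0 → ∫⁻ l, cj l * κ (l - m) ≤ Q) :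
    ∫⁻ l, cj l * (∫⁻ m, κ (l - m) * ck m * g m) ^ 2 ≤ P * Q * ∫⁻ m, ck m * g m ^ 2 := by
  calc _ ≤ ∫⁻ l, P * ∫⁻ m, cj l * κ (l - m) * (ck m * g m ^ 2) := by
        refine lintegral_mono fun l => ?_
        by_cases h0 : cj l = 0
        · simp [h0]
        have h := lintegral_sq_le volume (k := fun m => κ (l - m) * ck m) (g := g)
          (by fun_prop) hg
        calc _ ≤ cj l * (P * ∫⁻ m, κ (l - m) * ck m * g m ^ 2) := by
              gcongr
              exact h.trans (by gcongr; exact hP l h0)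
          _ = P * ∫⁻ m, cj l * κ (l - m) * (ck m * g m ^ 2) := by
              rw [mul_left_comm, ← lintegral_const_mul _ (by fun_prop)]
              simp only [mul_assoc]
    _ = P * ∫⁻ m, (∫⁻ l, cj l * κ (l - m)) * (ck m * g m ^ 2) := by
        rw [lintegral_const_mul _
          (Measurable.lintegral_prod_right' (f := fun z : ℝ × ℝ =>
            cj z.1 * κ (z.1 - z.2) * (ck z.2 * g z.2 ^ 2)) (by fun_prop)),
          lintegral_lintegral_swap (by fun_prop)]
        congr 1
        refine lintegral_congr fun m => ?_
        exact lintegral_mul_const (ck m * g m ^ 2) (f := fun l => cj l * κ (l - m)) (by fun_prop)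
    _ ≤ P * ∫⁻ m, Q * (ck m * g m ^ 2) := by
        refine mul_le_mul' le_rfl (lintegral_mono fun m => ?_)
        by_cases h0 : ck m = 0
        · simp [h0]
        · exact mul_le_mul' (hQ m h0) le_rfl
    _ = _ := by rw [lintegral_const_mul _ (by fun_prop), mul_assoc]

/-- Countable Minkowski inequality in `L²` for nonnegative functions. -/
lemma lintegral_tsum_sq_le {α : Type*} [MeasurableSpace α] (ν : Measure α) {h : ℕ → α → ℝ≥0∞}
    (hh : ∀ k, Measurable (h k)) :
    (∫⁻ x, (∑' k, h k x) ^ 2 ∂ν) ^ (1/2 : ℝ) ≤ ∑' k, (∫⁻ x, h k x ^ 2 ∂ν) ^ (1/2 : ℝ) := by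
  have hfin : ∀ n, (∫⁻ x, (∑ k ∈ Finset.range n, h k x) ^ 2 ∂ν) ^ (1/2 : ℝ) ≤
      ∑ k ∈ Finset.range n, (∫⁻ x, h k x ^ 2 ∂ν) ^ (1/2 : ℝ) := by
    intro n
    induction n with
    | zero => simp
    | succ n ih =>
      have := ENNReal.lintegral_Lp_add_le (μ := ν) (p := 2)
        (f := fun x => ∑ k ∈ Finset.range n, h k x) (g := h n) (by fun_prop) (by fun_prop)
        (by norm_num)
      simp only [Pi.add_apply, ENNReal.rpow_two] at this
      simp only [Finset.sum_range_succ]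
      exact this.trans (by gcongr)
  have hmono : Monotone fun (n : ℕ) (x : α) => (∑ k ∈ Finset.range n, h k x) ^ 2 := by
    intro n m hnm x
    simp only
    gcongr
  have hsup : ∀ x, (∑' k, h k x) ^ 2 = ⨆ n : ℕ, (∑ k ∈ Finset.range n, h k x) ^ 2 := by
    intro x
    have ht := ((ENNReal.continuous_pow 2).tendsto _).comp
      (ENNReal.tendsto_nat_tsum (fun k => h k x))
    exact tendsto_nhds_unique ht (tendsto_atTop_iSup fun n m hnm => hmono hnm x)
  simp only [hsup]
  rw [lintegral_iSup (by fun_prop) hmono]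
  rw [← ENNReal.le_rpow_inv_iff (by norm_num)]
  refine iSup_le fun n => ?_
  rw [ENNReal.le_rpow_inv_iff (by norm_num)]
  exact (hfin n).trans (ENNReal.sum_le_tsum _)

/-! ### Frequency localised estimates -/

/-- The properties of a dyadic partition of unity on which the estimate rests. -/
structure DyadicPieces (c : ℕ → ℝ → ℝ≥0∞) : Prop where
  meas : ∀ j, Measurable (c j)
  le_one : ∀ j z, c j z ≤ 1
  upper : ∀ j z, c j z ≠ 0 → |z| ≤ 2 ^ (j + 1)
  lower : ∀ j z, 1 ≤ j → c j z ≠ 0 → 2 ^ j / 2 ≤ |z|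
  sum : ∀ z, ∑' j, c j z = 1

lemma DyadicCutoffs.chiJ_nonneg {χ₀ χ : ℝ → ℝ} (h : DyadicCutoffs χ₀ χ) (j : ℕ) (z : ℝ) :
    0 ≤ chiJ χ₀ χ j z := by
  unfold chiJ; split_ifs
  exacts [(h.mem0 _).1, (h.mem1 _).1]

lemma DyadicCutoffs.pieces {χ₀ χ : ℝ → ℝ} (h : DyadicCutoffs χ₀ χ) :
    DyadicPieces (fun j z => ENNReal.ofReal (chiJ χ₀ χ j z)) := by
  have hp : ∀ j : ℕ, (2:ℝ) ^ (-(j:ℝ)) = (2 ^ j)⁻¹ := fun j => by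
    rw [Real.rpow_neg (by norm_num), Real.rpow_natCast]
  have habs : ∀ (j : ℕ) (z : ℝ), |(2:ℝ) ^ (-(j:ℝ)) * z| = |z| / 2 ^ j := fun j z => by
    rw [hp, abs_mul, abs_of_pos (by positivity)]; field_simp
  refine ⟨fun j => ?_, fun j z => ?_, fun j z hz => ?_, fun j z hj hz => ?_, fun z => ?_⟩
  · have h0 := h.smooth0.continuous
    have h1 := h.smooth1.continuous
    unfold chiJ
    split_ifs <;> exact ENNReal.measurable_ofReal.comp (Continuous.measurable (by fun_prop))
  · rw [← ENNReal.ofReal_one]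
    refine ENNReal.ofReal_le_ofReal ?_
    unfold chiJ; split_ifs
    exacts [(h.mem0 _).2, (h.mem1 _).2]
  · have hz' : chiJ χ₀ χ j z ≠ 0 := fun h0 => hz (by simp [h0])
    unfold chiJ at hz'
    split_ifs at hz' with hj
    · subst hj
      by_contra hcon
      exact hz' (h.supp0 z (by simpa using hcon))
    · have := (h.supp1 _ hz').2
      rw [habs, div_lt_iff₀ (by positivity)] at this
      rw [pow_succ]; linarith
  · have hz' : chiJ χ₀ χ j z ≠ 0 := fun h0 => hz (by simp [h0])
    unfold chiJ at hz'
    rw [if_neg (by omega)] at hz'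
    have := (h.supp1 _ hz').1
    rw [habs, lt_div_iff₀ (by positivity)] at this
    linarith
  · have hs : Summable fun j => chiJ χ₀ χ j z := by
      by_contra hcon
      have := h.partition z
      rw [tsum_eq_zero_of_not_summable hcon] at this
      exact zero_ne_one this
    rw [← ENNReal.ofReal_tsum_of_nonneg (fun j => h.chiJ_nonneg j z) hs, h.partition, ENNReal.ofReal_one]

lemma DyadicPieces.lintegral_le {c : ℕ → ℝ → ℝ≥0∞} (hc : DyadicPieces c) (j : ℕ) (o : ℝ) :
    ∫⁻ z, c j (z - o) ≤ 2 ^ (j + 2) := by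
  rw [lintegral_sub_right_eq_self (fun z => c j z) o]
  calc _ ≤ ∫⁻ z, (Set.Icc (-(2:ℝ) ^ (j+1)) (2 ^ (j+1))).indicator 1 z := by
        refine lintegral_mono fun z => ?_
        by_cases hz : c j z = 0
        · simp [hz]
        · rw [Set.indicator_of_mem (Set.mem_Icc.mpr (abs_le.mp (hc.upper j z hz)))]
          exact hc.le_one j z
    _ = _ := by
        rw [lintegral_indicator_one measurableSet_Icc, Real.volume_Icc, sub_neg_eq_add, ← two_mul,
          ← pow_succ', ENNReal.ofReal_pow (by norm_num)]
        simp

/-- Control of a convolution kernel `κ` by its mass `A` and by decay: at distance at least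
`2 ^ j / 4` from the origin it is at most `D (q / 2) ^ j`. -/
structure KernelBound (κ : ℝ → ℝ≥0∞) (A D q : ℝ≥0∞) : Prop where
  meas : Measurable κ
  mass : ∫⁻ u, κ u ≤ A
  decay : ∀ (j : ℕ) (u : ℝ), 2 ^ j / 4 ≤ |u| → κ u ≤ D * (2 ^ j)⁻¹ * q ^ j

/-- Square root of two, so that `√2 ^ j = 2 ^ (j / 2)`. -/
abbrev rt2 : ℝ≥0∞ := 2 ^ (1/2 : ℝ)

lemma rt2_sq : rt2 ^ 2 = 2 := by
  rw [← ENNReal.rpow_two, ← ENNReal.rpow_mul]; norm_num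

lemma two_pow_rpow_half (n : ℕ) : ((2:ℝ≥0∞) ^ n) ^ (1/2 : ℝ) = rt2 ^ n := by
  rw [← ENNReal.rpow_natCast, ← ENNReal.rpow_natCast, ← ENNReal.rpow_mul, ← ENNReal.rpow_mul,
    mul_comm]

lemma sq_rpow_half (x : ℝ≥0∞) : (x ^ 2) ^ (1/2 : ℝ) = x := by
  rw [← ENNReal.rpow_two, ← ENNReal.rpow_mul]; norm_num

/-- The bound for the operator from input modulation `2 ^ k` to output modulation `2 ^ j`. -/
def interaction (A D q : ℝ≥0∞) (j k : ℕ) : ℝ≥0∞ :=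
  if j < k + 3 then A else 4 * D * (2 ^ j)⁻¹ * q ^ j * rt2 ^ k * rt2 ^ j

/-- The estimate for input modulation `k` and output modulation `j`, at fixed spatial frequency.
For `j < k + 3` the `L¹` bound of the kernel suffices; otherwise the arguments are separated by
at least `2 ^ j / 4`, and pointwise decay is combined with the sizes `2 ^ (k + 2)`, `2 ^ (j + 2)` of
the two dyadic regions. -/
lemma block_bound {c : ℕ → ℝ → ℝ≥0∞} (hc : DyadicPieces c) {κ : ℝ → ℝ≥0∞} {A D q : ℝ≥0∞}
    (hκ : KernelBound κ A D q) {g : ℝ → ℝ≥0∞} (hg : Measurable g) (o : ℝ) (j k : ℕ) :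
    ∫⁻ l, c j (l - o) * (∫⁻ m, κ (l - m) * c k (m - o) * g m) ^ 2 ≤
      interaction A D q j k ^ 2 * ∫⁻ m, c k (m - o) * g m ^ 2 := by
  have mκ := hκ.meas
  have mj := hc.meas j
  have mk := hc.meas k
  by_cases hjk : j < k + 3
  · have := schur_bound (cj := fun l => c j (l - o)) (ck := fun m => c k (m - o)) (κ := κ) (g := g)
      (by fun_prop) (by fun_prop) mκ hg A A ?_ ?_
    · rw [interaction, if_pos hjk, sq]; exact this
    · intro l _
      calc _ ≤ ∫⁻ m, κ (l - m) := lintegral_mono fun m => mul_le_of_le_one_right' (hc.le_one _ _)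
        _ = ∫⁻ m, κ m := lintegral_sub_left_eq_self _ l
        _ ≤ A := hκ.mass
    · intro m _
      calc _ ≤ ∫⁻ l, κ (l - m) := lintegral_mono fun m => mul_le_of_le_one_left' (hc.le_one _ _)
        _ = ∫⁻ m, κ m := lintegral_sub_right_eq_self _ m
        _ ≤ A := hκ.mass
  · set M := D * (2 ^ j)⁻¹ * q ^ j with hM
    -- for separated frequencies the kernel is only evaluated far from the origin
    have hfar : ∀ l m, c j (l - o) ≠ 0 → c k (m - o) ≠ 0 → κ (l - m) ≤ M := by
      intro l m hl hm
      refine hκ.decay j _ ?_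
      have h1 := hc.lower j _ (by omega) hl
      have h2 := hc.upper k _ hm
      have h3 : (2:ℝ) ^ (k+1) ≤ 2 ^ j / 4 := by
        rw [le_div_iff₀ (by norm_num)]
        calc (2:ℝ) ^ (k+1) * 4 = 2 ^ (k+3) := by ring
          _ ≤ 2 ^ j := pow_le_pow_right₀ (by norm_num) (by omega)
      have h4 : |l - o| ≤ |l - m| + |m - o| := abs_sub_le _ _ _
      linarith
    have := schur_bound (cj := fun l => c j (l - o)) (ck := fun m => c k (m - o)) (κ := κ) (g := g)
      (by fun_prop) (by fun_prop) mκ hg (M * 2 ^ (k+2)) (M * 2 ^ (j+2)) ?_ ?_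
    · refine this.trans (le_of_eq ?_)
      rw [interaction, if_neg hjk]
      congr 1
      have e : ∀ n : ℕ, (rt2 ^ n) ^ 2 = 2 ^ n := fun n => by
        rw [← pow_mul, mul_comm, pow_mul, rt2_sq]
      calc _ = 16 * M ^ 2 * 2 ^ k * 2 ^ j := by ring
        _ = 16 * M ^ 2 * (rt2 ^ k) ^ 2 * (rt2 ^ j) ^ 2 := by rw [e, e]
        _ = _ := by rw [hM]; ring
    · intro l hl
      calc _ ≤ ∫⁻ m, M * c k (m - o) := by
            refine lintegral_mono fun m => ?_
            by_cases hm : c k (m - o) = 0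
            · simp [hm]
            · simp only; gcongr; exact hfar l m hl hm
        _ ≤ _ := by
            rw [lintegral_const_mul _ (by fun_prop)]
            gcongr
            exact hc.lintegral_le k o
    · intro m hm
      calc _ ≤ ∫⁻ l, M * c j (l - o) := by
            refine lintegral_mono fun l => ?_
            by_cases hl : c j (l - o) = 0
            · simp [hl]
            · simp only; rw [mul_comm]; gcongr; exact hfar l m hl hm
        _ ≤ _ := by
            rw [lintegral_const_mul _ (by fun_prop)]
            gcongr
            exact hc.lintegral_le j o

lemma sum_rt2_le (n : ℕ) : ∑ j ∈ Finset.range n, rt2 ^ j ≤ 4 * rt2 ^ n := by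
  -- `5 ≤ 4 √2` makes the constant `4` reproduce itself in the induction
  have h5 : (4 + 1 : ℝ≥0∞) ≤ 4 * rt2 := by
    rw [← sq_rpow_half (4 + 1), ← sq_rpow_half (4 * rt2), mul_pow, rt2_sq]
    refine ENNReal.rpow_le_rpow ?_ (by norm_num)
    norm_num
  induction n with
  | zero => simp
  | succ n ih =>
    calc _ ≤ 4 * rt2 ^ n + rt2 ^ n := by rw [Finset.sum_range_succ]; gcongr
      _ = (4 + 1) * rt2 ^ n := by ring
      _ ≤ 4 * rt2 * rt2 ^ n := by gcongr
      _ = _ := by ring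

/-- Column sums of the interaction matrix, weighted by `2 ^ (j / 2)`, are controlled by
`2 ^ (k / 2)`: the near part is a growing geometric sum, the far part is a geometric series of ratio `q`. -/
lemma sum_interaction_le (A D q : ℝ≥0∞) (k : ℕ) :
    ∑' j, rt2 ^ j * interaction A D q j k ≤
      (4 * rt2 ^ 3 * A + 4 * D * (1 - q)⁻¹) * rt2 ^ k := by
  have h2 : ∀ j : ℕ, rt2 ^ j * (4 * D * (2 ^ j)⁻¹ * q ^ j * rt2 ^ k * rt2 ^ j) =
      4 * D * rt2 ^ k * q ^ j := fun j => by
    have e : rt2 ^ j * rt2 ^ j * (2 ^ j)⁻¹ = 1 := by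
      rw [← mul_pow, ← sq, rt2_sq]
      exact ENNReal.mul_inv_cancel (by positivity) (by finiteness)
    calc _ = (rt2 ^ j * rt2 ^ j * (2 ^ j)⁻¹) * (4 * D * rt2 ^ k * q ^ j) := by ring
      _ = _ := by rw [e, one_mul]
  calc _ ≤ ∑' j, ((if j ∈ Finset.range (k + 3) then rt2 ^ j * A else 0) +
        4 * D * rt2 ^ k * q ^ j) := by
        refine ENNReal.tsum_le_tsum fun j => ?_
        unfold interaction
        by_cases hj : j < k + 3
        · simp [hj]
        · simp only [hj, if_false, Finset.mem_range, zero_add, h2, le_refl]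
    _ = A * ∑ j ∈ Finset.range (k + 3), rt2 ^ j + 4 * D * rt2 ^ k * (1 - q)⁻¹ := by
        rw [ENNReal.tsum_add, ENNReal.tsum_mul_left, ENNReal.tsum_geometric, Finset.mul_sum]
        congr 1
        rw [tsum_eq_sum (s := Finset.range (k + 3)) (by intro j hj; rw [if_neg hj])]
        refine Finset.sum_congr rfl fun j hj => ?_
        rw [if_pos hj, mul_comm]
    _ ≤ A * (4 * rt2 ^ (k + 3)) + 4 * D * rt2 ^ k * (1 - q)⁻¹ := by
        gcongr
        exact sum_rt2_le _
    _ = _ := by ring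

/-- The `X`-type norm of `G`, as an extended nonnegative number: modulation is measured from the
curve `ω`, and `w` is the spatial frequency weight. -/
def eX (c : ℕ → ℝ → ℝ≥0∞) (ω : ℝ → ℝ) (w : ℝ → ℝ≥0∞) (G : ℝ × ℝ → ℝ≥0∞) : ℝ≥0∞ :=
  ∑' j, rt2 ^ j * (∫⁻ p : ℝ × ℝ, c j (p.2 - ω p.1) * w p.1 * G p ^ 2) ^ (1/2 : ℝ)

/-- Convolution in the second variable with an admissible kernel is bounded for the norm `eX`. -/
lemma eX_convolution_le {c : ℕ → ℝ → ℝ≥0∞} (hc : DyadicPieces c) {κ : ℝ → ℝ≥0∞} {A D q : ℝ≥0∞}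
    (hκ : KernelBound κ A D q) {ω : ℝ → ℝ} (hω : Measurable ω) {w : ℝ → ℝ≥0∞} (hw : Measurable w)
    {G H : ℝ × ℝ → ℝ≥0∞} (hG : Measurable G)
    (hH : ∀ ξ l, H (ξ, l) ≤ ∫⁻ m, κ (l - m) * G (ξ, m)) :
    eX c ω w H ≤ (4 * rt2 ^ 3 * A + 4 * D * (1 - q)⁻¹) * eX c ω w G := by
  have mκ := hκ.meas
  have mc := hc.meas
  let h : ℕ → ℝ × ℝ → ℝ≥0∞ := fun k p => ∫⁻ m, κ (p.2 - m) * c k (m - ω p.1) * G (p.1, m)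
  have mh : ∀ k, Measurable (h k) := fun k =>
    Measurable.lintegral_prod_right' (f := fun z : (ℝ × ℝ) × ℝ =>
      κ (z.1.2 - z.2) * c k (z.2 - ω z.1.1) * G (z.1.1, z.2)) (by fun_prop)
  have hHsum : ∀ p, H p ≤ ∑' k, h k p := by
    rintro ⟨ξ, l⟩
    refine (hH ξ l).trans (le_of_eq ?_)
    simp only [h]
    rw [← lintegral_tsum (fun k => by fun_prop)]
    refine lintegral_congr fun m => ?_
    rw [ENNReal.tsum_mul_right, ENNReal.tsum_mul_left, hc.sum, mul_one]
  let B : ℕ → ℝ≥0∞ := fun k =>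
    (∫⁻ p : ℝ × ℝ, c k (p.2 - ω p.1) * w p.1 * G p ^ 2) ^ (1/2 : ℝ)
  have hblock : ∀ j k, (∫⁻ p : ℝ × ℝ, c j (p.2 - ω p.1) * w p.1 * h k p ^ 2) ^ (1/2 : ℝ) ≤
      interaction A D q j k * B k := by
    intro j k
    rw [← sq_rpow_half (interaction A D q j k), ← ENNReal.mul_rpow_of_nonneg _ _ (by norm_num)]
    refine ENNReal.rpow_le_rpow ?_ (by norm_num)
    rw [Measure.volume_eq_prod, lintegral_prod _ (by fun_prop), lintegral_prod _ (by fun_prop),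
      ← lintegral_const_mul _ (Measurable.lintegral_prod_right' (f := fun p : ℝ × ℝ =>
        c k (p.2 - ω p.1) * w p.1 * G p ^ 2) (by fun_prop))]
    refine lintegral_mono fun ξ => ?_
    have hb := block_bound hc hκ (g := fun m => G (ξ, m)) (by fun_prop) (ω ξ) j k
    have mhξ : Measurable fun l => h k (ξ, l) := (mh k).comp (by fun_prop)
    calc ∫⁻ l, c j (l - ω ξ) * w ξ * h k (ξ, l) ^ 2
        = w ξ * ∫⁻ l, c j (l - ω ξ) * h k (ξ, l) ^ 2 := by
          rw [← lintegral_const_mul _ (by fun_prop)]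
          refine lintegral_congr fun l => ?_
          ring
      _ ≤ w ξ * (interaction A D q j k ^ 2 * ∫⁻ m, c k (m - ω ξ) * G (ξ, m) ^ 2) :=
          mul_le_mul' le_rfl hb
      _ = interaction A D q j k ^ 2 * ∫⁻ l, c k (l - ω ξ) * w ξ * G (ξ, l) ^ 2 := by
          rw [mul_left_comm, ← lintegral_const_mul _ (by fun_prop)]
          congr 1
          refine lintegral_congr fun l => ?_
          ring
  have hj : ∀ j, (∫⁻ p : ℝ × ℝ, c j (p.2 - ω p.1) * w p.1 * H p ^ 2) ^ (1/2 : ℝ) ≤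
      ∑' k, interaction A D q j k * B k := by
    intro j
    have e : ∀ x y : ℝ≥0∞, (x ^ (1/2 : ℝ) * y) ^ 2 = x * y ^ 2 := fun x y => by
      rw [mul_pow, ← ENNReal.rpow_two, ← ENNReal.rpow_mul]; norm_num
    have hm := lintegral_tsum_sq_le (volume : Measure (ℝ × ℝ))
      (h := fun k p => (c j (p.2 - ω p.1) * w p.1) ^ (1/2 : ℝ) * h k p) (fun k => by fun_prop)
    simp only [ENNReal.tsum_mul_left, e] at hm
    refine le_trans (ENNReal.rpow_le_rpow (lintegral_mono fun p => ?_) (by norm_num))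
      (hm.trans (ENNReal.tsum_le_tsum fun k => hblock j k))
    exact mul_le_mul' le_rfl (pow_le_pow_left' (hHsum p) 2)
  calc eX c ω w H ≤ ∑' j, ∑' k, rt2 ^ j * interaction A D q j k * B k := by
        refine ENNReal.tsum_le_tsum fun j => ?_
        simp only [mul_assoc]
        rw [ENNReal.tsum_mul_left]
        exact mul_le_mul' le_rfl (by simpa only [mul_assoc] using hj j)
    _ = ∑' k, (∑' j, rt2 ^ j * interaction A D q j k) * B k := by
        rw [ENNReal.tsum_comm]
        simp only [ENNReal.tsum_mul_right]
    _ ≤ ∑' k, ((4 * rt2 ^ 3 * A + 4 * D * (1 - q)⁻¹) * rt2 ^ k) * B k :=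
        ENNReal.tsum_le_tsum fun k => mul_le_mul' (sum_interaction_le A D q k) le_rfl
    _ = _ := by
        simp only [mul_assoc, ENNReal.tsum_mul_left]
        rfl

/-! ### Schwartz decay: the kernel bound and finiteness of the norm -/

lemma schwartz_decay {E : Type*} [NormedAddCommGroup E] [NormedSpace ℝ E]
    (F : SchwartzMap E ℂ) (N : ℕ) :
    ∃ C : ℝ, 0 ≤ C ∧ ∀ x, (1 + ‖x‖) ^ N * ‖F x‖ ≤ C := by
  have h := fun x => SchwartzMap.one_add_le_sup_seminorm_apply (𝕜 := ℝ) (m := (N, 0)) (k := N)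
    (n := 0) le_rfl le_rfl F x
  simp only [norm_iteratedFDeriv_zero] at h
  exact ⟨_, le_trans (by positivity) (h 0), h⟩

/-- The kernel of multiplication by `ψ (t / δ)` has mass bounded uniformly in `δ`, and its decay
constant with ratio `q = 2 ^ (-ε)` grows at most like `δ ^ (-ε)`. -/
lemma kernel_bound (Φ : SchwartzMap ℝ ℂ) {ε : ℝ} (hε : 0 < ε) (hε1 : ε ≤ 1) :
    ∃ A D : ℝ≥0∞, A ≠ ∞ ∧ D ≠ ∞ ∧ ∀ δ ∈ Set.Ioo (0:ℝ) 1,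
      KernelBound (fun u => ENNReal.ofReal (δ / (2 * Real.pi)) *
        ‖Φ (-(δ / (2 * Real.pi)) * u)‖ₑ) A (D * ENNReal.ofReal (δ ^ (-ε)))
        (ENNReal.ofReal (2 ^ (-ε))) := by
  have hpi := Real.pi_pos
  obtain ⟨C, hC0, hC⟩ := schwartz_decay Φ 2
  refine ⟨ENNReal.ofReal (∫ v, ‖Φ v‖), ENNReal.ofReal (C * (2 * Real.pi) ^ ε * 4 ^ (1 + ε)),
    ENNReal.ofReal_ne_top, ENNReal.ofReal_ne_top, fun δ hδ => ?_⟩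
  have hδ0 := hδ.1
  set b := δ / (2 * Real.pi) with hb
  have hb0 : 0 < b := by positivity
  refine ⟨?_, ?_, ?_⟩
  · have := Φ.continuous
    exact Continuous.measurable (by fun_prop) |>.const_mul _
  · have hi : Integrable (fun u => Φ (-b * u)) :=
      Φ.integrable.comp_mul_left' (by simpa using hb0.ne')
    rw [lintegral_const_mul' _ _ ENNReal.ofReal_ne_top, ← ofReal_integral_norm_eq_lintegral_enorm hi,
      Measure.integral_comp_mul_left (fun v => ‖Φ v‖), ← ENNReal.ofReal_mul hb0.le]
    refine ENNReal.ofReal_le_ofReal (le_of_eq ?_)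
    rw [abs_inv, abs_neg, abs_of_pos hb0, smul_eq_mul]
    field_simp
  · intro j u hu
    have h2j : (0:ℝ) < 2 ^ j := by positivity
    have hu0 : 0 < |u| := lt_of_lt_of_le (by positivity) hu
    have hqj : ENNReal.ofReal (2 ^ (-ε)) ^ j = ENNReal.ofReal ((2 ^ j) ^ (-ε)) := by
      rw [← ENNReal.ofReal_pow (by positivity), ← Real.rpow_natCast, ← Real.rpow_mul (by norm_num),
        ← Real.rpow_natCast, ← Real.rpow_mul (by norm_num), mul_comm]
    have h2i : ((2:ℝ≥0∞) ^ j)⁻¹ = ENNReal.ofReal ((2 ^ j)⁻¹) := by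
      rw [ENNReal.ofReal_inv_of_pos h2j, ENNReal.ofReal_pow (by norm_num)]
      simp
    rw [hqj, h2i, ← ofReal_norm, ← ENNReal.ofReal_mul hb0.le,
      ← ENNReal.ofReal_mul (by positivity), ← ENNReal.ofReal_mul (by positivity),
      ← ENNReal.ofReal_mul (by positivity)]
    refine ENNReal.ofReal_le_ofReal ?_
    have hΦ := hC (-b * u)
    rw [Real.norm_eq_abs, abs_mul, abs_neg, abs_of_pos hb0] at hΦ
    -- `x ^ (1 + ε) ≤ (1 + x) ^ 2` trades one power of decay for the loss `δ ^ (-ε)`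
    have hx : (b * (2 ^ j / 4)) ^ (1 + ε) ≤ (1 + b * |u|) ^ 2 := by
      calc (b * (2 ^ j / 4)) ^ (1 + ε) ≤ (1 + b * |u|) ^ (1 + ε) := by
            refine Real.rpow_le_rpow (by positivity) ?_ (by positivity)
            nlinarith
        _ ≤ (1 + b * |u|) ^ (2:ℝ) :=
            Real.rpow_le_rpow_of_exponent_le (by nlinarith) (by linarith)
        _ = _ := Real.rpow_two _
    have hy : (b * (2 ^ j / 4)) ^ (1 + ε) * ‖Φ (-b * u)‖ ≤ C :=
      (mul_le_mul_of_nonneg_right hx (norm_nonneg _)).trans hΦ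
    have hpos : 0 < (b * (2 ^ j / 4)) ^ (1 + ε) := by positivity
    have hy2 : b * ‖Φ (-b * u)‖ ≤ b * (C / (b * (2 ^ j / 4)) ^ (1 + ε)) := by
      gcongr
      rw [le_div_iff₀ hpos, mul_comm]; exact hy
    refine hy2.trans (le_of_eq ?_)
    rw [Real.mul_rpow hb0.le (by positivity), Real.div_rpow h2j.le (by norm_num),
      Real.rpow_neg hδ0.le, Real.rpow_neg h2j.le, Real.rpow_add hb0, Real.rpow_add h2j,
      Real.rpow_one, Real.rpow_one, hb, Real.div_rpow hδ0.le (by positivity)]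
    have : 0 < δ ^ ε := by positivity
    have : 0 < (2 * Real.pi) ^ ε := by positivity
    have : 0 < ((2:ℝ) ^ j) ^ ε := by positivity
    field_simp

lemma measurable_disp (a : ℝ) : Measurable (disp a) := by
  unfold disp; fun_prop

lemma abs_disp_le {a : ℝ} (ha : a ∈ Set.Ioo (0 : ℝ) 1) (ξ : ℝ) : |disp a ξ| ≤ (1 + |ξ|) ^ 3 := by
  have h0 := abs_nonneg ξ
  have : |ξ| ^ (1 + a) ≤ (1 + |ξ|) ^ 2 := by
    calc |ξ| ^ (1 + a) ≤ (1 + |ξ|) ^ (1 + a) :=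
          Real.rpow_le_rpow h0 (by linarith) (by linarith [ha.1])
      _ ≤ (1 + |ξ|) ^ (2:ℝ) :=
          Real.rpow_le_rpow_of_exponent_le (by linarith) (by linarith [ha.2])
      _ = _ := Real.rpow_two _
  unfold disp
  rw [abs_mul, abs_of_nonneg (a := |ξ| ^ (1 + a)) (by positivity)]
  calc |ξ| * |ξ| ^ (1 + a) ≤ (1 + |ξ|) * (1 + |ξ|) ^ 2 := by gcongr; linarith
    _ = _ := by ring

/-- The frequency weight `(1 + |ξ|) ^ (2 s)`. -/
def wt (s ξ : ℝ) : ℝ≥0∞ := ENNReal.ofReal ((1 + |ξ|) ^ (2 * s))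

lemma measurable_wt (s : ℝ) : Measurable (wt s) := by
  unfold wt; fun_prop

/-- The norm of a Schwartz function is finite: on the `j`-th region `2 ^ j ≤ 4 (1 + ‖p‖) ^ 3`, as
`ω` grows at most cubically, so Schwartz decay yields a factor `2 ^ (-4 j)`. -/
lemma eX_schwartz_ne_top {c : ℕ → ℝ → ℝ≥0∞} (hc : DyadicPieces c) {a : ℝ}
    (ha : a ∈ Set.Ioo (0 : ℝ) 1) (s : ℝ) (F : SchwartzMap (ℝ × ℝ) ℂ) :
    eX c (disp a) (wt s) (fun p => ‖F p‖ₑ) ≠ ∞ := by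
  obtain ⟨C, hC0, hC⟩ := schwartz_decay F (8 + ⌈|s|⌉₊)
  have hI : Integrable (fun p : ℝ × ℝ => 256 * C ^ 2 * (1 + ‖p‖) ^ (-(4:ℝ))) := by
    refine (integrable_one_add_norm ?_).const_mul _
    rw [Module.finrank_prod, Module.finrank_self]; norm_num
  set B := ∫⁻ p : ℝ × ℝ, ENNReal.ofReal (256 * C ^ 2 * (1 + ‖p‖) ^ (-(4:ℝ))) with hB
  have hBtop : B ≠ ∞ := hI.lintegral_lt_top.ne
  have hpt : ∀ (j : ℕ) (p : ℝ × ℝ), c j (p.2 - disp a p.1) * wt s p.1 * ‖F p‖ₑ ^ 2 ≤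
      (((2:ℝ≥0∞) ^ j)⁻¹ ^ 2) ^ 2 * ENNReal.ofReal (256 * C ^ 2 * (1 + ‖p‖) ^ (-(4:ℝ))) := by
    intro j p
    by_cases h0 : c j (p.2 - disp a p.1) = 0
    · simp [h0]
    set W := 1 + ‖p‖ with hW
    have hW1 : 1 ≤ W := by rw [hW]; linarith [norm_nonneg p]
    have hξ : 1 + |p.1| ≤ W := by
      rw [hW]; have := norm_fst_le p; rw [Real.norm_eq_abs] at this; linarith
    have hl : |p.2| ≤ W := by
      rw [hW]; have := norm_snd_le p; rw [Real.norm_eq_abs] at this; linarith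
    have hW3 : W ≤ W ^ 3 := le_self_pow₀ hW1 (by norm_num)
    have hz : |p.2 - disp a p.1| ≤ 2 * W ^ 3 := by
      have h1 : |disp a p.1| ≤ W ^ 3 :=
        (abs_disp_le ha p.1).trans (pow_le_pow_left₀ (by positivity) hξ 3)
      have h2 := abs_sub p.2 (disp a p.1)
      linarith
    have h2j : (2:ℝ) ^ j ≤ 4 * W ^ 3 := by
      rcases Nat.eq_zero_or_pos j with rfl | hj
      · rw [pow_zero]; linarith
      · have := hc.lower j _ hj h0
        linarith
    have hw : (1 + |p.1|) ^ (2 * s) ≤ W ^ (2 * ⌈|s|⌉₊) := by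
      calc (1 + |p.1|) ^ (2 * s) ≤ (1 + |p.1|) ^ (2 * (⌈|s|⌉₊ : ℝ)) :=
            Real.rpow_le_rpow_of_exponent_le (by linarith [abs_nonneg p.1])
              (by linarith [le_abs_self s, Nat.le_ceil |s|])
        _ ≤ W ^ (2 * (⌈|s|⌉₊ : ℝ)) := Real.rpow_le_rpow (by positivity) hξ (by positivity)
        _ = _ := by rw [← Real.rpow_natCast]; push_cast; rfl
    have hreal : (1 + |p.1|) ^ (2 * s) * ‖F p‖ ^ 2 ≤
        (((2 ^ j)⁻¹ ^ 2) ^ 2) * (256 * C ^ 2 * W ^ (-(4:ℝ))) := by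
      have hF := hC p
      have h4 : W ^ (-(4:ℝ)) = (W ^ 4)⁻¹ := by
        rw [Real.rpow_neg (by positivity)]; norm_cast
      have hF2 : (W ^ (8 + ⌈|s|⌉₊) * ‖F p‖) ^ 2 ≤ C ^ 2 := by gcongr
      have h5 : ((2:ℝ) ^ j) ^ 4 ≤ (4 * W ^ 3) ^ 4 := by gcongr
      rw [h4]
      have key : (1 + |p.1|) ^ (2 * s) * ‖F p‖ ^ 2 * ((2 ^ j) ^ 4 * W ^ 4) ≤ 256 * C ^ 2 := by
        calc _ ≤ W ^ (2 * ⌈|s|⌉₊) * ‖F p‖ ^ 2 * ((4 * W ^ 3) ^ 4 * W ^ 4) := by gcongr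
          _ = 256 * (W ^ (8 + ⌈|s|⌉₊) * ‖F p‖) ^ 2 := by ring
          _ ≤ _ := by gcongr
      have hpos : 0 < ((2:ℝ) ^ j) ^ 4 * W ^ 4 := by positivity
      rw [← le_div_iff₀ hpos] at key
      refine key.trans (le_of_eq ?_)
      field_simp
    calc _ ≤ 1 * wt s p.1 * ‖F p‖ₑ ^ 2 := by gcongr; exact hc.le_one _ _
      _ = ENNReal.ofReal ((1 + |p.1|) ^ (2 * s) * ‖F p‖ ^ 2) := by
          rw [one_mul, wt, ← ofReal_norm, ← ENNReal.ofReal_pow (norm_nonneg _),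
            ← ENNReal.ofReal_mul (by positivity)]
      _ ≤ ENNReal.ofReal ((((2 ^ j)⁻¹ ^ 2) ^ 2) * (256 * C ^ 2 * W ^ (-(4:ℝ)))) :=
          ENNReal.ofReal_le_ofReal hreal
      _ = _ := by
          have h2i : ((2:ℝ≥0∞) ^ j)⁻¹ = ENNReal.ofReal ((2 ^ j)⁻¹) := by
            rw [ENNReal.ofReal_inv_of_pos (by positivity), ENNReal.ofReal_pow (by norm_num)]
            simp
          rw [h2i, ENNReal.ofReal_mul (by positivity), ENNReal.ofReal_pow (by positivity),
            ENNReal.ofReal_pow (by positivity)]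
  have hrt : rt2 ≤ 2 := by
    calc rt2 ≤ 2 ^ (1:ℝ) := ENNReal.rpow_le_rpow_of_exponent_le (by norm_num) (by norm_num)
      _ = 2 := by simp
  have hle : eX c (disp a) (wt s) (fun p => ‖F p‖ₑ) ≤ ∑' j : ℕ, B ^ (1/2 : ℝ) * 2⁻¹ ^ j := by
    refine ENNReal.tsum_le_tsum fun j => ?_
    calc _ ≤ 2 ^ j * ((((2:ℝ≥0∞) ^ j)⁻¹ ^ 2) ^ 2 * B) ^ (1/2 : ℝ) := by
          rw [hB, ← lintegral_const_mul' _ _ (by finiteness)]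
          exact mul_le_mul' (pow_le_pow_left' hrt j)
            (ENNReal.rpow_le_rpow (lintegral_mono (hpt j)) (by norm_num))
      _ = (2 ^ j * ((2:ℝ≥0∞) ^ j)⁻¹) * (((2:ℝ≥0∞) ^ j)⁻¹ * B ^ (1/2 : ℝ)) := by
          rw [ENNReal.mul_rpow_of_nonneg _ _ (by norm_num), sq_rpow_half]; ring
      _ = _ := by
          rw [ENNReal.mul_inv_cancel (by positivity) (by finiteness), ENNReal.inv_pow]; ring
  refine ne_top_of_le_ne_top ?_ hle
  rw [ENNReal.tsum_mul_left, ENNReal.tsum_geometric]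
  refine ENNReal.mul_ne_top (ENNReal.rpow_ne_top_of_nonneg (by norm_num) hBtop) ?_
  simp

/-! ### Comparison of the real and the extended norm -/

lemma ofReal_two_rpow (j : ℕ) : ENNReal.ofReal ((2:ℝ) ^ ((j:ℝ) * (1/2))) = rt2 ^ j := by
  rw [← ENNReal.rpow_natCast, ← ENNReal.rpow_mul, ← ENNReal.ofReal_rpow_of_pos (by norm_num),
    mul_comm]
  simp

/-- No integrability of the left-hand side is needed: divergent integrals and sums have the junk
value `0`. -/
lemma Xnorm_le_of_eX {a s : ℝ} {χ₀ χ : ℝ → ℝ} (hχ : DyadicCutoffs χ₀ χ) (g : ℝ × ℝ → ℂ) (R : ℝ)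
    (hR : 0 ≤ R)
    (h : eX (fun j z => ENNReal.ofReal (chiJ χ₀ χ j z)) (disp a) (wt s)
      (fun p => ‖FT2 g p.1 p.2‖ₑ) ≤ ENNReal.ofReal R) :
    Xnorm a χ₀ χ (1/2) s g ≤ R := by
  have hI : ∀ j, 0 ≤ ∫ p : ℝ × ℝ, chiJ χ₀ χ j (p.2 - disp a p.1) * (1 + |p.1|) ^ (2 * s) *
      ‖FT2 g p.1 p.2‖ ^ 2 := fun j => integral_nonneg fun p => by
    have := hχ.chiJ_nonneg j (p.2 - disp a p.1)
    positivity
  unfold Xnorm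
  refine Real.tsum_le_of_sum_le (fun j => mul_nonneg (by positivity) (Real.rpow_nonneg (hI j) _)) ?_
  intro u
  rw [← ENNReal.ofReal_le_ofReal_iff hR]
  refine le_trans ?_ ((ENNReal.sum_le_tsum u).trans h)
  rw [ENNReal.ofReal_sum_of_nonneg
    (fun j _ => mul_nonneg (by positivity) (Real.rpow_nonneg (hI j) _))]
  refine Finset.sum_le_sum fun j _ => ?_
  rw [ENNReal.ofReal_mul (by positivity), ofReal_two_rpow,
    ← ENNReal.ofReal_rpow_of_nonneg (hI j) (by norm_num)]
  gcongr
  rw [← Real.enorm_of_nonneg (hI j)]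
  refine (enorm_integral_le_lintegral_enorm _).trans (lintegral_mono fun p => le_of_eq ?_)
  have := hχ.chiJ_nonneg j (p.2 - disp a p.1)
  rw [Real.enorm_of_nonneg (by positivity), ENNReal.ofReal_mul (by positivity),
    ENNReal.ofReal_mul this, ENNReal.ofReal_pow (by positivity), ofReal_norm, wt]

lemma eX_eq_Xnorm {a s : ℝ} (ha : a ∈ Set.Ioo (0 : ℝ) 1) {χ₀ χ : ℝ → ℝ}
    (hχ : DyadicCutoffs χ₀ χ) (f F : SchwartzMap (ℝ × ℝ) ℂ)
    (hF : ∀ ξ lam, F (ξ, lam) = FT2 (fun p => f p) ξ lam) :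
    eX (fun j z => ENNReal.ofReal (chiJ χ₀ χ j z)) (disp a) (wt s) (fun p => ‖F p‖ₑ) =
      ENNReal.ofReal (Xnorm a χ₀ χ (1/2) s (fun p => f p)) := by
  have hfin := eX_schwartz_ne_top hχ.pieces ha s F
  have mχ : ∀ j, Measurable (chiJ χ₀ χ j) := fun j => by
    have h0 := hχ.smooth0.continuous
    have h1 := hχ.smooth1.continuous
    unfold chiJ
    split_ifs <;> exact Continuous.measurable (by fun_prop)
  have mω := measurable_disp a
  have mF := F.continuous.measurable
  have hF' : ∀ p : ℝ × ℝ, FT2 (fun p => f p) p.1 p.2 = F p := fun p => (hF p.1 p.2).symm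
  have hI : ∀ j, 0 ≤ ∫ p : ℝ × ℝ, chiJ χ₀ χ j (p.2 - disp a p.1) * (1 + |p.1|) ^ (2 * s) *
      ‖F p‖ ^ 2 := fun j => integral_nonneg fun p => by
    have := hχ.chiJ_nonneg j (p.2 - disp a p.1)
    positivity
  have hpt : ∀ (j : ℕ) (p : ℝ × ℝ), ENNReal.ofReal (chiJ χ₀ χ j (p.2 - disp a p.1)) *
      wt s p.1 * ‖F p‖ₑ ^ 2 = ENNReal.ofReal (chiJ χ₀ χ j (p.2 - disp a p.1) *
        (1 + |p.1|) ^ (2 * s) * ‖F p‖ ^ 2) := fun j p => by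
    have := hχ.chiJ_nonneg j (p.2 - disp a p.1)
    rw [ENNReal.ofReal_mul (by positivity), ENNReal.ofReal_mul this,
      ENNReal.ofReal_pow (by positivity), ofReal_norm, wt]
  have hterm : ∀ j : ℕ, rt2 ^ j * (∫⁻ p : ℝ × ℝ, ENNReal.ofReal (chiJ χ₀ χ j (p.2 - disp a p.1)) *
      wt s p.1 * ‖F p‖ₑ ^ 2) ^ (1/2 : ℝ) = ENNReal.ofReal ((2 : ℝ) ^ ((j : ℝ) * (1/2)) *
    (∫ p : ℝ × ℝ, chiJ χ₀ χ j (p.2 - disp a p.1) * (1 + |p.1|) ^ (2 * s) *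
      ‖F p‖ ^ 2) ^ ((1 : ℝ) / 2)) := by
    intro j
    rw [ENNReal.ofReal_mul (by positivity), ofReal_two_rpow,
      ← ENNReal.ofReal_rpow_of_nonneg (hI j) (by norm_num)]
    have hj := ENNReal.ne_top_of_tsum_ne_top hfin j
    have hj2 : ∫⁻ p : ℝ × ℝ, ENNReal.ofReal (chiJ χ₀ χ j (p.2 - disp a p.1)) *
        wt s p.1 * ‖F p‖ₑ ^ 2 ≠ ∞ := by
      intro htop
      rw [htop, ENNReal.top_rpow_of_pos (by norm_num), ENNReal.mul_top] at hj
      · exact hj rfl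
      · exact pow_ne_zero _ (by simp [rt2])
    simp only [hpt] at hj2 ⊢
    rw [ofReal_integral_eq_lintegral_ofReal]
    · have hm : Measurable fun p : ℝ × ℝ => chiJ χ₀ χ j (p.2 - disp a p.1) *
          (1 + |p.1|) ^ (2 * s) * ‖F p‖ ^ 2 := by
        have := mχ j
        fun_prop
      refine ⟨hm.aestronglyMeasurable, ?_⟩
      rw [hasFiniteIntegral_iff_ofReal]
      · exact lt_top_iff_ne_top.mpr hj2
      · exact Filter.Eventually.of_forall fun p => by
          have := hχ.chiJ_nonneg j (p.2 - disp a p.1)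
          simp only [Pi.zero_apply]; positivity
    · exact Filter.Eventually.of_forall fun p => by
        have := hχ.chiJ_nonneg j (p.2 - disp a p.1)
        simp only [Pi.zero_apply]; positivity
  unfold eX at hfin ⊢
  unfold Xnorm
  simp only [hterm, hF'] at hfin ⊢
  have hs := ENNReal.summable_toReal hfin
  simp only [ENNReal.toReal_ofReal (mul_nonneg (Real.rpow_nonneg zero_le_two _)
    (Real.rpow_nonneg (hI _) _))] at hs
  rw [ENNReal.ofReal_tsum_of_nonneg _ hs]
  exact fun j => mul_nonneg (by positivity) (Real.rpow_nonneg (hI j) _)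

theorem statement14 (a : ℝ) (ha : a ∈ Set.Ioo (0 : ℝ) 1) (s : ℝ)
    (χ₀ χ : ℝ → ℝ) (hχ : DyadicCutoffs χ₀ χ)
    (ψ : ℝ → ℝ) (hψ : TimeCutoff ψ) :
    ∀ ε > (0 : ℝ), ∃ C > 0, ∀ δ ∈ Set.Ioo (0 : ℝ) 1, ∀ f : SchwartzMap (ℝ × ℝ) ℂ,
      Xnorm a χ₀ χ (1 / 2) s (fun p : ℝ × ℝ => (ψ (p.2 / δ) : ℂ) * f p) ≤
        C * δ ^ (-ε) * Xnorm a χ₀ χ (1 / 2) s (fun p => f p) := by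
  intro ε hε
  obtain ⟨Φ, hΦ⟩ := exists_fourier_rep ψ hψ
  -- `kernel_bound` uses quadratic decay of `Φ`, so the loss exponent is capped at `1`
  set η := min ε 1 with hη
  have hη0 : 0 < η := lt_min hε one_pos
  obtain ⟨A, D, hA, hD, hκ⟩ := kernel_bound Φ hη0 (min_le_right _ _)
  set q : ℝ≥0∞ := ENNReal.ofReal (2 ^ (-η)) with hq
  have hq1 : q < 1 := by
    rw [hq, ENNReal.ofReal_lt_one]
    exact Real.rpow_lt_one_of_one_lt_of_neg (by norm_num) (by linarith)
  have hqi : (1 - q)⁻¹ ≠ ∞ := ENNReal.inv_ne_top.mpr (tsub_pos_of_lt hq1).ne'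
  set K : ℝ≥0∞ := 4 * rt2 ^ 3 * A + 4 * D * (1 - q)⁻¹ with hK
  have hrt : rt2 ≠ ∞ := ENNReal.rpow_ne_top_of_nonneg (by norm_num) (by norm_num)
  have hKtop : K ≠ ∞ := by rw [hK]; finiteness
  refine ⟨K.toReal + 1, by positivity, fun δ hδ f => ?_⟩
  obtain ⟨F, hF⟩ := exists_schwartz_FT2 f
  have hX0 : 0 ≤ Xnorm a χ₀ χ (1 / 2) s (fun p => f p) := by
    unfold Xnorm
    refine tsum_nonneg fun j => mul_nonneg (by positivity)
      (Real.rpow_nonneg (integral_nonneg fun p => ?_) _)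
    have := hχ.chiJ_nonneg j (p.2 - disp a p.1)
    simp only [Pi.zero_apply]
    positivity
  have hδ0 := hδ.1
  have hδη : δ ^ (-η) ≤ δ ^ (-ε) :=
    Real.rpow_le_rpow_of_exponent_ge hδ0 hδ.2.le (neg_le_neg (min_le_left _ _))
  have hδ1 : 1 ≤ δ ^ (-η) :=
    Real.one_le_rpow_of_pos_of_le_one_of_nonpos hδ0 hδ.2.le (by linarith)
  refine Xnorm_le_of_eX hχ _ _ (by positivity) ?_
  have mF := F.continuous.measurable
  refine (eX_convolution_le hχ.pieces (hκ δ hδ) (measurable_disp a) (measurable_wt s)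
    (G := fun p => ‖F p‖ₑ) (by fun_prop)
    (fun ξ l => enorm_FT2_cutoff_le ψ Φ hΦ f F hF δ hδ0 ξ l)).trans ?_
  rw [eX_eq_Xnorm ha hχ f F hF, ENNReal.ofReal_mul (by positivity)]
  refine mul_le_mul' ?_ le_rfl
  calc 4 * rt2 ^ 3 * A + 4 * (D * ENNReal.ofReal (δ ^ (-η))) * (1 - q)⁻¹
      ≤ 4 * rt2 ^ 3 * A * ENNReal.ofReal (δ ^ (-η)) +
        4 * (D * ENNReal.ofReal (δ ^ (-η))) * (1 - q)⁻¹ := by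
        refine add_le_add ?_ le_rfl
        exact le_mul_of_one_le_right' (ENNReal.one_le_ofReal.mpr hδ1)
    _ = K * ENNReal.ofReal (δ ^ (-η)) := by rw [hK]; ring
    _ ≤ ENNReal.ofReal (K.toReal + 1) * ENNReal.ofReal (δ ^ (-ε)) := by
        gcongr
        rw [ENNReal.le_ofReal_iff_toReal_le hKtop (by positivity)]
        linarith
    _ = _ := (ENNReal.ofReal_mul (by positivity)).symm
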